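/- There exists an absolute constant c > 0 such that for every radial weight ω and every a ∈ 𝔻 with a ≠ 0, ∫_𝔻 |B^ω_a(ζ)| ω(ζ) dA(ζ) ≥ (c/|a|) · log(1/(1−|a|)). In particular, sup_{a∈𝔻} ∫_𝔻 |B^ω_a(ζ)| ω(ζ) dA(ζ) = ∞, and consequently P_ω is not bounded from L^∞ to H^∞ for any radial weight ω. -/

import Mathlib

/-! Write `s(re^{iθ}) = iθe^{-iθ}` for `-π < θ ≤ π`, a function bounded by `π`. Integrating the
kernel series termwise in polar coordinates gives
`P_ω s(z) = ∑ ω_{n+1} / ((n + 1) ω_{2n+1}) (-z)^n`,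
because `∫ iθe^{-i(n+1)θ} dθ = 2π(-1)^n / (n + 1)` over `(-π, π)`. Moments decrease, so every ratio
`ω_{n+1} / ω_{2n+1}` is at least `1`, and for `0 < x < 1`
`P_ω s(-x) ≥ ∑ x^n / (n + 1) = (1/x) log (1/(1 - x))`.
Hence already the single bounded function `s` has an unbounded projection. Since
`|P_ω s(z)| ≤ (1/π) ∫ |s| |B^ω_z| ω ≤ ∫ |B^ω_z| ω`, and the last integral depends only on `|z|`, the
lower bound passes to the kernel.
-/

open MeasureTheory Set Complex
open scoped ENNReal

noncomputable section

/-- The open unit disc in the complex plane. -/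
def unitDisc : Set ℂ := Metric.ball 0 1

/-- Tail integral `ω̂(r) = ∫_r^1 ω(s) ds`. -/
def tl (ω : ℝ → ℝ) (r : ℝ) : ℝ := ∫ s in r..1, ω s

/-- Moment `ω_x = ∫_0^1 s^x ω(s) ds` (real power in the exponent). -/
def mom (ω : ℝ → ℝ) (x : ℝ) : ℝ := ∫ s in (0:ℝ)..1, s ^ x * ω s

/-- `ω` is a radial weight: nonnegative and integrable on `[0,1)`, with positive
tail integrals. -/
def IsRadialWeight (ω : ℝ → ℝ) : Prop :=
  (∀ s ∈ Ico (0:ℝ) 1, 0 ≤ ω s) ∧ IntegrableOn ω (Ico (0:ℝ) 1) ∧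
    ∀ r ∈ Ico (0:ℝ) 1, 0 < tl ω r

/-- The upper doubling class `D̂`: `sup_{0≤r<1} ω̂(r)/ω̂((1+r)/2) < ∞`. -/
def Dhat (ω : ℝ → ℝ) : Prop :=
  ∃ C : ℝ, ∀ r ∈ Ico (0:ℝ) 1, tl ω r ≤ C * tl ω ((1 + r) / 2)

/-- The class `Ď`: there are `K > 1`, `C > 1` with `ω̂(r) ≥ C ω̂(1 - (1-r)/K)`. -/
def Dcheck (ω : ℝ → ℝ) : Prop :=
  ∃ K C : ℝ, 1 < K ∧ 1 < C ∧ ∀ r ∈ Ico (0:ℝ) 1, C * tl ω (1 - (1 - r) / K) ≤ tl ω r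

/-- The class `D = D̂ ∩ Ď`. -/
def DD (ω : ℝ → ℝ) : Prop := Dhat ω ∧ Dcheck ω

/-- The Bergman reproducing kernel `B^ω_z(ζ) = Σ_n (conj z · ζ)^n / (2 ω_{2n+1})`. -/
def bKer (ω : ℝ → ℝ) (z ζ : ℂ) : ℂ :=
  ∑' n : ℕ, (starRingEnd ℂ z * ζ) ^ n / ((2 * mom ω (2 * (n : ℝ) + 1) : ℝ) : ℂ)

/-- The integrand of the Bergman projection. -/
def bInt (ω : ℝ → ℝ) (f : ℂ → ℂ) (z ζ : ℂ) : ℂ :=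
  f ζ * starRingEnd ℂ (bKer ω z ζ) * ((ω ‖ζ‖ : ℝ) : ℂ)

/-- The Bergman projection `P_ω f(z) = ∫_𝔻 f(ζ) conj(B^ω_z(ζ)) ω(ζ) dA(ζ)`,
where `dA` is normalized area measure `dx dy / π`. -/
def bProj (ω : ℝ → ℝ) (f : ℂ → ℂ) (z : ℂ) : ℂ :=
  (Real.pi : ℂ)⁻¹ * ∫ ζ in unitDisc, bInt ω f z ζ

/-- The weighted sup-norm `ess sup_{z ∈ 𝔻} |f(z)| v(|z|)`, valued in `ℝ≥0∞`. -/
def wSup (v : ℝ → ℝ) (f : ℂ → ℂ) : ℝ≥0∞ :=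
  essSup (fun z => ENNReal.ofReal (‖f z‖ * v ‖z‖)) (volume.restrict unitDisc)

/-- `P_ω : L^∞_v → H^∞_v` is bounded: there is `C > 0` so that for every
`f ∈ L^∞_v` the defining integral converges absolutely at every point of `𝔻`,
`P_ω f` is analytic on `𝔻`, and `‖P_ω f‖_{L^∞_v} ≤ C ‖f‖_{L^∞_v}`. -/
def ProjBddH (ω v : ℝ → ℝ) : Prop :=
  ∃ C : ℝ, 0 < C ∧ ∀ f : ℂ → ℂ,
    AEStronglyMeasurable f (volume.restrict unitDisc) → wSup v f < ⊤ →
    (∀ z ∈ unitDisc, IntegrableOn (bInt ω f z) unitDisc) ∧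
    DifferentiableOn ℂ (bProj ω f) unitDisc ∧
    wSup v (bProj ω f) ≤ ENNReal.ofReal C * wSup v f

/-- `P_ω : L^∞_v → B^∞_v` is bounded: there is `C > 0` so that for every
`f ∈ L^∞_v` the defining integral converges absolutely at every point of `𝔻`,
`P_ω f` is analytic on `𝔻`, and `‖P_ω f‖_{B^∞_v} ≤ C ‖f‖_{L^∞_v}`. -/
def ProjBddB (ω v : ℝ → ℝ) : Prop :=
  ∃ C : ℝ, 0 < C ∧ ∀ f : ℂ → ℂ,
    AEStronglyMeasurable f (volume.restrict unitDisc) → wSup v f < ⊤ →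
    (∀ z ∈ unitDisc, IntegrableOn (bInt ω f z) unitDisc) ∧
    DifferentiableOn ℂ (bProj ω f) unitDisc ∧
    ∀ z ∈ unitDisc,
      ENNReal.ofReal ((1 - ‖z‖) * v ‖z‖ * ‖deriv (bProj ω f) z‖) ≤
        ENNReal.ofReal C * wSup v f

/-- The moment condition `sup_{x ≥ 0} (ν_x / ω_{2x}) (ω/ν̂)_x < ∞`. -/
def MomCond (ω ν : ℝ → ℝ) : Prop :=
  ∃ C : ℝ, ∀ x : ℝ, 0 ≤ x →
    mom ν x / mom ω (2 * x) * mom (fun s => ω s / tl ν s) x ≤ C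

/-- The tail condition `sup_{0 ≤ r < 1} (ν̂(r)/ω̂(r)) ∫_r^1 ω(s)/ν̂(s) ds < ∞`. -/
def TailCond (ω ν : ℝ → ℝ) : Prop :=
  ∃ C : ℝ, ∀ r ∈ Ico (0:ℝ) 1, tl ν r / tl ω r * tl (fun s => ω s / tl ν s) r ≤ C

section

open scoped Real ComplexConjugate

/-- The weighted `L¹` norm `∫_𝔻 |B^ω_a| ω` of the Bergman kernel, taken with respect to the
unnormalized area measure `dx dy`. -/
def bKerL1 (ω : ℝ → ℝ) (a : ℂ) : ℝ≥0∞ :=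
  ∫⁻ ζ in unitDisc, ENNReal.ofReal (‖bKer ω a ζ‖ * ω ‖ζ‖)

/-- The function `re^{iθ} ↦ iθe^{-iθ}`, `-π < θ ≤ π`, whose Bergman projection is unbounded. The
factor `e^{-iθ}` turns its `n`-th angular coefficient into `2π(-1)^n / (n + 1)`. -/
def sawtooth (ζ : ℂ) : ℂ := I * arg ζ * cexp (-(arg ζ * I))

lemma integral_ofReal_mul_cexp {c : ℂ} (hc : c ≠ 0) (a b : ℝ) :
    ∫ t in a..b, (t : ℂ) * cexp (c * t) =
      (b * cexp (c * b) - a * cexp (c * a)) / c - (cexp (c * b) - cexp (c * a)) / c ^ 2 := by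
  have hexp (t : ℝ) : HasDerivAt (fun t : ℝ ↦ cexp (c * t) / c) (cexp (c * t)) t := by
    simpa [hc] using (((hasDerivAt_id t).ofReal_comp.const_mul c).cexp.div_const c)
  rw [intervalIntegral.integral_mul_deriv_eq_deriv_mul (u := fun t : ℝ ↦ (t : ℂ))
    (fun t _ ↦ (hasDerivAt_id t).ofReal_comp) (fun t _ ↦ hexp t)
    intervalIntegrable_const (Continuous.intervalIntegrable (by fun_prop) a b)]
  simp only [ofReal_one, one_mul, intervalIntegral.integral_div, integral_exp_mul_complex hc]
  field_simp

lemma setIntegral_ball_norm_mul_arg {𝕜 : Type*} [RCLike 𝕜] (u v : ℝ → 𝕜) (R : ℝ) :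
    ∫ ζ in Metric.ball (0 : ℂ) R, u ‖ζ‖ * v (arg ζ) =
      (∫ r in Ioo 0 R, r • u r) * ∫ θ in Ioo (-π) π, v θ := by
  have hpolar : ∀ p ∈ polarCoord.target,
      p.1 • (Metric.ball (0 : ℂ) R).indicator (fun ζ ↦ u ‖ζ‖ * v (arg ζ))
          (Complex.polarCoord.symm p) =
        (Ioo 0 R ×ˢ Ioo (-π) π).indicator (fun p ↦ p.1 • u p.1 * v p.2) p := by
    intro p hp
    have hnorm_arg := Complex.polarCoord.right_inv (x := p) hp
    rw [Complex.polarCoord_apply] at hnorm_arg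
    have hnorm : ‖Complex.polarCoord.symm p‖ = p.1 := congrArg Prod.fst hnorm_arg
    have harg : arg (Complex.polarCoord.symm p) = p.2 := congrArg Prod.snd hnorm_arg
    have hmem : Complex.polarCoord.symm p ∈ Metric.ball (0 : ℂ) R ↔ p ∈ Ioo 0 R ×ˢ Ioo (-π) π := by
      rw [mem_ball_zero_iff, hnorm]
      exact ⟨fun hlt ↦ ⟨⟨hp.1, hlt⟩, hp.2⟩, fun h ↦ h.1.2⟩
    simp only [indicator, hmem, hnorm, harg, smul_ite, smul_zero, smul_mul_assoc]
  have hsub : Ioo 0 R ×ˢ Ioo (-π) π ⊆ polarCoord.target := fun p hp ↦ ⟨hp.1.1, hp.2⟩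
  rw [← integral_indicator Metric.isOpen_ball.measurableSet,
    ← Complex.integral_comp_polarCoord_symm,
    setIntegral_congr_fun polarCoord.open_target.measurableSet hpolar,
    setIntegral_indicator (measurableSet_Ioo.prod measurableSet_Ioo), inter_eq_right.2 hsub,
    Measure.volume_eq_prod, setIntegral_prod_mul (fun r ↦ r • u r) v]

lemma le_essSup_of_continuousOn {X : Type*} [TopologicalSpace X] [MeasurableSpace X] {μ : Measure X}
    [μ.IsOpenPosMeasure] {U : Set X} (hU : IsOpen U) {f : X → ℝ≥0∞} (hf : ContinuousOn f U)
    {x : X} (hx : x ∈ U) : f x ≤ essSup f (μ.restrict U) := by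
  have hae : (fun y ↦ f y ⊔ essSup f (μ.restrict U)) =ᵐ[μ.restrict U]
      fun _ ↦ essSup f (μ.restrict U) :=
    (ENNReal.ae_le_essSup f).mono fun y hy ↦ sup_eq_right.2 hy
  exact sup_eq_right.1 <|
    Measure.eqOn_open_of_ae_eq hae hU (hf.sup continuousOn_const) continuousOn_const hx

lemma hasSum_pow_div_add_one {x : ℝ} (h0 : x ≠ 0) (h1 : |x| < 1) :
    HasSum (fun n : ℕ ↦ x ^ n / (n + 1)) (1 / x * Real.log (1 / (1 - x))) := by
  have hterm (n : ℕ) : x ^ n / ((n : ℝ) + 1) = 1 / x * (x ^ (n + 1) / (n + 1)) := by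
    rw [pow_succ]; field_simp
  simp only [one_div (1 - x), Real.log_inv, hterm]
  exact (Real.hasSum_pow_div_log_of_abs_lt_one h1).mul_left (1 / x)

lemma exists_lt_one_div_mul_log (M : ℝ) :
    ∃ x ∈ Ioo (0 : ℝ) 1, M < 1 / x * Real.log (1 / (1 - x)) := by
  set x := 1 - Real.exp (-(|M| + 1)) with hx
  have hx1 : x < 1 := sub_lt_self 1 (Real.exp_pos _)
  have hx0 : 0 < x := sub_pos.2 (Real.exp_lt_one_iff.2 (neg_neg_of_pos (by positivity)))
  have hlog : Real.log (1 / (1 - x)) = |M| + 1 := by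
    rw [hx, sub_sub_cancel, one_div, Real.log_inv, Real.log_exp, neg_neg]
  refine ⟨x, ⟨hx0, hx1⟩, ?_⟩
  calc M < |M| + 1 := (le_abs_self M).trans_lt (lt_add_one _)
    _ ≤ 1 / x * (|M| + 1) := le_mul_of_one_le_left (by positivity) (one_le_one_div hx0 hx1.le)
    _ = 1 / x * Real.log (1 / (1 - x)) := by rw [hlog]

lemma neg_ofReal_mem_unitDisc {x : ℝ} (hx : x ∈ Ioo (0 : ℝ) 1) : -(x : ℂ) ∈ unitDisc := by
  rw [unitDisc, mem_ball_zero_iff, norm_neg, norm_real, Real.norm_of_nonneg hx.1.le]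
  exact hx.2

/-! ### Moments of radial weights -/

lemma mom_eq_setIntegral_Ioo (ω : ℝ → ℝ) (x : ℝ) :
    mom ω x = ∫ s in Ioo (0 : ℝ) 1, s ^ x * ω s := by
  rw [mom, intervalIntegral.integral_of_le zero_le_one, integral_Ioc_eq_integral_Ioo]

namespace IsRadialWeight

variable {ω : ℝ → ℝ} (hω : IsRadialWeight ω)
include hω

lemma nonneg_of_mem_unitDisc {ζ : ℂ} (hζ : ζ ∈ unitDisc) : 0 ≤ ω ‖ζ‖ :=
  hω.1 _ ⟨norm_nonneg ζ, mem_ball_zero_iff.1 hζ⟩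

lemma integrableOn_Ioo : IntegrableOn ω (Ioo 0 1) :=
  hω.2.1.mono_set Ioo_subset_Ico_self

lemma integrableOn_rpow_mul {x : ℝ} (hx : 0 ≤ x) :
    IntegrableOn (fun s ↦ s ^ x * ω s) (Ioo 0 1) := by
  refine Integrable.bdd_mul (c := 1) hω.integrableOn_Ioo
    (by fun_prop : Measurable fun s : ℝ ↦ s ^ x).aestronglyMeasurable ?_
  filter_upwards [self_mem_ae_restrict measurableSet_Ioo] with s hs
  rw [Real.norm_of_nonneg (Real.rpow_nonneg hs.1.le x)]
  exact Real.rpow_le_one hs.1.le hs.2.le hx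

lemma mom_antitoneOn : AntitoneOn (mom ω) (Ici 0) := by
  intro x hx y hy hxy
  rw [mom_eq_setIntegral_Ioo, mom_eq_setIntegral_Ioo]
  exact setIntegral_mono_on (hω.integrableOn_rpow_mul hy) (hω.integrableOn_rpow_mul hx)
    measurableSet_Ioo fun s hs ↦ mul_le_mul_of_nonneg_right
      (Real.rpow_le_rpow_of_exponent_ge hs.1 hs.2.le hxy) (hω.1 s (Ioo_subset_Ico_self hs))

lemma rpow_mul_tl_le_mom {x r : ℝ} (hx : 0 ≤ x) (hr : r ∈ Ioo (0 : ℝ) 1) :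
    r ^ x * tl ω r ≤ mom ω x := by
  have hsub : Ioo r 1 ⊆ Ioo 0 1 := Ioo_subset_Ioo_left hr.1.le
  rw [mom_eq_setIntegral_Ioo, tl, intervalIntegral.integral_of_le hr.2.le,
    integral_Ioc_eq_integral_Ioo, ← integral_const_mul]
  calc ∫ s in Ioo r 1, r ^ x * ω s
      ≤ ∫ s in Ioo r 1, s ^ x * ω s :=
        setIntegral_mono_on ((hω.integrableOn_Ioo.mono_set hsub).const_mul _)
          ((hω.integrableOn_rpow_mul hx).mono_set hsub) measurableSet_Ioo fun s hs ↦
          mul_le_mul_of_nonneg_right (Real.rpow_le_rpow hr.1.le hs.1.le hx)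
            (hω.1 s (Ioo_subset_Ico_self (hsub hs)))
    _ ≤ ∫ s in Ioo 0 1, s ^ x * ω s := by
        refine setIntegral_mono_set (hω.integrableOn_rpow_mul hx) ?_ hsub.eventuallyLE
        filter_upwards [self_mem_ae_restrict measurableSet_Ioo] with s hs
        exact mul_nonneg (Real.rpow_nonneg hs.1.le x) (hω.1 s (Ioo_subset_Ico_self hs))

lemma mom_pos {x : ℝ} (hx : 0 ≤ x) : 0 < mom ω x := by
  have hhalf : (1 / 2 : ℝ) ∈ Ioo (0 : ℝ) 1 := by norm_num
  exact (mul_pos (Real.rpow_pos_of_pos hhalf.1 x) (hω.2.2 _ (Ioo_subset_Ico_self hhalf))).trans_le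
    (hω.rpow_mul_tl_le_mom hx hhalf)

lemma summable_pow_div_mom {ρ : ℝ} (h0 : 0 ≤ ρ) (h1 : ρ < 1) :
    Summable fun n : ℕ ↦ ρ ^ n / (2 * mom ω (2 * n + 1)) := by
  obtain ⟨r, hρr, hr1⟩ := exists_between ((Real.sqrt_lt' one_pos).2 (by simpa using h1))
  have hr0 : 0 < r := (Real.sqrt_nonneg ρ).trans_lt hρr
  have hρ : ρ < r ^ 2 := (Real.sqrt_lt' hr0).1 hρr
  have htl : 0 < tl ω r := hω.2.2 r ⟨hr0.le, hr1⟩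
  have hgeom : Summable fun n : ℕ ↦ (ρ / r ^ 2) ^ n :=
    summable_geometric_of_lt_one (by positivity) ((div_lt_one (by positivity)).2 hρ)
  refine .of_nonneg_of_le (fun n ↦ ?_) (fun n ↦ ?_) (hgeom.mul_left (1 / (2 * (r * tl ω r))))
  · have := hω.mom_pos (x := 2 * n + 1) (by positivity)
    positivity
  · have hmom : r ^ (2 * n + 1) * tl ω r ≤ mom ω (2 * n + 1) := by
      simpa [← Real.rpow_natCast] using
        hω.rpow_mul_tl_le_mom (x := 2 * n + 1) (by positivity) ⟨hr0, hr1⟩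
    calc ρ ^ n / (2 * mom ω (2 * n + 1)) ≤ ρ ^ n / (2 * (r ^ (2 * n + 1) * tl ω r)) := by gcongr
      _ = 1 / (2 * (r * tl ω r)) * (ρ / r ^ 2) ^ n := by
        rw [div_pow, pow_succ, pow_mul]; field_simp

/-! ### Kernel and projection -/

lemma integrableOn_norm : IntegrableOn (fun ζ : ℂ ↦ ω ‖ζ‖) unitDisc := by
  rw [unitDisc, integrableOn_fun_norm_addHaar]
  simpa using hω.integrableOn_rpow_mul zero_le_one

lemma norm_bKer_term (w : ℂ) (n : ℕ) :
    ‖w ^ n / ((2 * mom ω (2 * n + 1) : ℝ) : ℂ)‖ = ‖w‖ ^ n / (2 * mom ω (2 * n + 1)) := by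
  have := hω.mom_pos (x := 2 * n + 1) (by positivity)
  rw [norm_div, norm_pow, norm_real, Real.norm_of_nonneg (by positivity)]

lemma hasSum_bKer {z ζ : ℂ} (hzζ : ‖z‖ * ‖ζ‖ < 1) :
    HasSum (fun n : ℕ ↦ (conj z * ζ) ^ n / ((2 * mom ω (2 * n + 1) : ℝ) : ℂ)) (bKer ω z ζ) := by
  refine (Summable.of_norm ?_).hasSum
  simp only [hω.norm_bKer_term, norm_mul, RCLike.norm_conj]
  exact hω.summable_pow_div_mom (by positivity) hzζ

lemma hasSum_bInt (f : ℂ → ℂ) {z ζ : ℂ} (hzζ : ‖z‖ * ‖ζ‖ < 1) :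
    HasSum (fun n : ℕ ↦ z ^ n / ((2 * mom ω (2 * n + 1) : ℝ) : ℂ) *
      (conj ζ ^ n * (f ζ * ω ‖ζ‖))) (bInt ω f z ζ) := by
  have hconj := ((hasSum_conj'.2 (hω.hasSum_bKer hzζ)).mul_left (f ζ)).mul_right (ω ‖ζ‖ : ℂ)
  refine hconj.congr_fun fun n ↦ ?_
  simp only [map_div₀, map_pow, map_mul, conj_conj, conj_ofReal]
  ring

lemma hasSum_bProj {f : ℂ → ℂ} (hf : IntegrableOn (fun ζ ↦ f ζ * ω ‖ζ‖) unitDisc) {z : ℂ}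
    (hz : z ∈ unitDisc) :
    HasSum (fun n : ℕ ↦ (π : ℂ)⁻¹ * (z ^ n / ((2 * mom ω (2 * n + 1) : ℝ) : ℂ) *
      ∫ ζ in unitDisc, conj ζ ^ n * (f ζ * ω ‖ζ‖))) (bProj ω f z) := by
  have hz1 : ‖z‖ < 1 := mem_ball_zero_iff.1 hz
  have hmeas : MeasurableSet unitDisc := Metric.isOpen_ball.measurableSet
  refine HasSum.mul_left _ ?_
  simp only [← integral_const_mul]
  refine hasSum_integral_of_dominated_convergence
    (fun n ζ ↦ ‖z‖ ^ n / (2 * mom ω (2 * n + 1)) * ‖f ζ * ω ‖ζ‖‖) (fun n ↦ ?_) (fun n ↦ ?_)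
    (.of_forall fun ζ ↦ (hω.summable_pow_div_mom (norm_nonneg z) hz1).mul_right _) ?_ ?_
  · exact (((by fun_prop : Continuous fun ζ : ℂ ↦ conj ζ ^ n).aestronglyMeasurable).mul
      hf.aestronglyMeasurable).const_mul _
  · filter_upwards [self_mem_ae_restrict hmeas] with ζ hζ
    have hζ1 : ‖conj ζ ^ n‖ ≤ 1 := by
      rw [norm_pow, RCLike.norm_conj]
      exact pow_le_one₀ (norm_nonneg ζ) (mem_ball_zero_iff.1 hζ).le
    rw [norm_mul, norm_mul, ← hω.norm_bKer_term]
    gcongr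
    exact mul_le_of_le_one_left (norm_nonneg _) hζ1
  · simp only [tsum_mul_right]
    exact hf.norm.const_mul _
  · filter_upwards [self_mem_ae_restrict hmeas] with ζ hζ
    exact hω.hasSum_bInt f <|
      mul_lt_one_of_nonneg_of_lt_one_left (norm_nonneg z) hz1 (mem_ball_zero_iff.1 hζ).le

lemma enorm_bProj_le {f : ℂ → ℂ} {M : ℝ} (hf : ∀ ζ ∈ unitDisc, ‖f ζ‖ ≤ M) (z : ℂ) :
    ‖bProj ω f z‖ₑ ≤ ENNReal.ofReal (M / π) * bKerL1 ω z := by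
  have hbound : ∀ ζ ∈ unitDisc,
      ‖bInt ω f z ζ‖ₑ ≤ ENNReal.ofReal M * ENNReal.ofReal (‖bKer ω z ζ‖ * ω ‖ζ‖) := by
    intro ζ hζ
    have hωζ := hω.nonneg_of_mem_unitDisc hζ
    rw [← ENNReal.ofReal_mul ((norm_nonneg _).trans (hf ζ hζ)), ← ofReal_norm, bInt, norm_mul,
      norm_mul, RCLike.norm_conj, norm_real, Real.norm_of_nonneg hωζ, mul_assoc]
    gcongr
    exact hf ζ hζ
  calc ‖bProj ω f z‖ₑ
      = ENNReal.ofReal π⁻¹ * ‖∫ ζ in unitDisc, bInt ω f z ζ‖ₑ := by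
        rw [bProj, enorm_mul, ← ofReal_norm (π : ℂ)⁻¹, norm_inv, norm_real,
          Real.norm_of_nonneg Real.pi_nonneg]
    _ ≤ ENNReal.ofReal π⁻¹ * (ENNReal.ofReal M * bKerL1 ω z) := by
        gcongr
        refine (enorm_integral_le_lintegral_enorm _).trans ?_
        rw [bKerL1, ← lintegral_const_mul' _ _ ENNReal.ofReal_ne_top]
        exact setLIntegral_mono' Metric.isOpen_ball.measurableSet hbound
    _ = ENNReal.ofReal (M / π) * bKerL1 ω z := by
        rw [← mul_assoc, ← ENNReal.ofReal_mul (by positivity), inv_mul_eq_div]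

end IsRadialWeight

lemma bKerL1_circle_mul (ω : ℝ → ℝ) (c : Circle) (a : ℂ) : bKerL1 ω (c * a) = bKerL1 ω a := by
  have hker (ζ : ℂ) : bKer ω (c * a) (rotation c ζ) = bKer ω a ζ := by
    have hconj : conj (c * a) * (c * ζ) = conj a * ζ := by
      have hc : conj (c : ℂ) * c = 1 := by simp [Complex.conj_mul', Circle.norm_coe]
      rw [map_mul]
      linear_combination conj a * ζ * hc
    rw [bKer, rotation_apply, hconj, bKer]
  have hpre : rotation c ⁻¹' unitDisc = unitDisc := by
    rw [unitDisc, (rotation c).preimage_ball, map_zero]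
  rw [bKerL1, ← (rotation c).measurePreserving.setLIntegral_comp_preimage_emb
    (rotation c).toHomeomorph.measurableEmbedding, hpre]
  simp only [hker, LinearIsometryEquiv.norm_map, bKerL1]

lemma bKerL1_eq_of_norm_eq (ω : ℝ → ℝ) {a b : ℂ} (hab : ‖a‖ = ‖b‖) : bKerL1 ω a = bKerL1 ω b := by
  have hnorm (z : ℂ) : bKerL1 ω z = bKerL1 ω ‖z‖ := by
    conv_lhs => rw [← norm_mul_exp_arg_mul_I z, mul_comm, ← Circle.coe_exp]
    exact bKerL1_circle_mul ω _ _
  rw [hnorm a, hnorm b, hab]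

/-! ### The projection of the sawtooth -/

lemma norm_sawtooth_le (ζ : ℂ) : ‖sawtooth ζ‖ ≤ π := by
  rw [sawtooth, ← neg_mul, ← ofReal_neg, norm_mul, norm_exp_ofReal_mul_I, norm_mul, norm_I,
    one_mul, mul_one, norm_real]
  exact abs_arg_le_pi ζ

lemma measurable_sawtooth : Measurable sawtooth := by
  unfold sawtooth; fun_prop

lemma integral_sawtooth_angular (n : ℕ) :
    ∫ θ in Ioo (-π) π, I * θ * cexp (-((n + 1) * θ * I)) = 2 * π * (-1) ^ n / (n + 1) := by
  have hn : (n + 1 : ℂ) ≠ 0 := Nat.cast_add_one_ne_zero n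
  have hc : -((n + 1) * I) ≠ 0 := neg_ne_zero.2 (mul_ne_zero hn I_ne_zero)
  have hneg : cexp (-((n + 1) * I) * (-π : ℝ)) = (-1) ^ (n + 1) := by
    rw [← exp_pi_mul_I, ← exp_nat_mul]; push_cast; ring_nf
  have hpos : cexp (-((n + 1) * I) * π) = (-1) ^ (n + 1) := by
    rw [← exp_neg_pi_mul_I, ← exp_nat_mul]; push_cast; ring_nf
  have hintegrand (θ : ℝ) :
      I * θ * cexp (-((n + 1) * θ * I)) = I * (θ * cexp (-((n + 1) * I) * θ)) := by ring_nf
  simp only [hintegrand]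
  rw [← integral_Ioc_eq_integral_Ioo, integral_const_mul,
    ← intervalIntegral.integral_of_le (neg_le_self Real.pi_nonneg),
    integral_ofReal_mul_cexp hc, hneg, hpos]
  push_cast
  field_simp
  ring

lemma setIntegral_conj_pow_mul_sawtooth (ω : ℝ → ℝ) (n : ℕ) :
    ∫ ζ in unitDisc, conj ζ ^ n * (sawtooth ζ * ω ‖ζ‖) =
      mom ω (n + 1) * (2 * π * (-1) ^ n / (n + 1)) := by
  have hpolar (ζ : ℂ) : conj ζ ^ n * (sawtooth ζ * ω ‖ζ‖) =
      ((‖ζ‖ ^ n * ω ‖ζ‖ : ℝ) : ℂ) * (I * arg ζ * cexp (-((n + 1) * arg ζ * I))) := by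
    have hconj : conj ζ = ‖ζ‖ * cexp (-(arg ζ * I)) := by
      conv_lhs => rw [← norm_mul_exp_arg_mul_I ζ, map_mul, ← exp_conj]
      simp
    have hexp : cexp (-((n + 1) * arg ζ * I)) =
        cexp (-(arg ζ * I)) ^ n * cexp (-(arg ζ * I)) := by
      rw [← pow_succ, ← exp_nat_mul]; push_cast; ring_nf
    rw [hconj, hexp, sawtooth]
    push_cast
    ring
  have hradial : ∫ r in Ioo (0 : ℝ) 1, r • ((r ^ n * ω r : ℝ) : ℂ) = mom ω (n + 1) := by
    rw [mom_eq_setIntegral_Ioo, ← integral_complex_ofReal]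
    refine setIntegral_congr_fun measurableSet_Ioo fun r hr ↦ ?_
    simp only [Real.rpow_add_one hr.1.ne', Real.rpow_natCast, real_smul]
    push_cast
    ring
  simp only [hpolar]
  rw [unitDisc, setIntegral_ball_norm_mul_arg (fun r ↦ ((r ^ n * ω r : ℝ) : ℂ))
    (fun θ ↦ I * θ * cexp (-((n + 1) * θ * I))), hradial, integral_sawtooth_angular]

namespace IsRadialWeight

variable {ω : ℝ → ℝ} (hω : IsRadialWeight ω)
include hω

lemma hasSum_bProj_sawtooth {z : ℂ} (hz : z ∈ unitDisc) :
    HasSum (fun n : ℕ ↦ (-z) ^ n / (n + 1) * ((mom ω (n + 1) / mom ω (2 * n + 1) : ℝ) : ℂ))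
      (bProj ω sawtooth z) := by
  have hint : IntegrableOn (fun ζ ↦ sawtooth ζ * ω ‖ζ‖) unitDisc :=
    hω.integrableOn_norm.ofReal.bdd_mul (c := π) measurable_sawtooth.aestronglyMeasurable
      (.of_forall norm_sawtooth_le)
  convert hω.hasSum_bProj hint hz using 2 with n
  have hπ : (π : ℂ) ≠ 0 := ofReal_ne_zero.2 Real.pi_ne_zero
  rw [setIntegral_conj_pow_mul_sawtooth, neg_pow]
  push_cast
  field_simp

lemma one_div_mul_log_le_norm_bProj_sawtooth {x : ℝ} (hx : x ∈ Ioo (0 : ℝ) 1) :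
    1 / x * Real.log (1 / (1 - x)) ≤ ‖bProj ω sawtooth (-x)‖ := by
  have hlog := hasSum_pow_div_add_one hx.1.ne' (by rw [abs_of_pos hx.1]; exact hx.2)
  have hre := hasSum_re (hω.hasSum_bProj_sawtooth (neg_ofReal_mem_unitDisc hx))
  refine (hasSum_le (fun n ↦ ?_) hlog hre).trans (re_le_norm _)
  have hratio : 1 ≤ mom ω (n + 1) / mom ω (2 * n + 1) := by
    rw [one_le_div (hω.mom_pos (by positivity))]
    exact hω.mom_antitoneOn (mem_Ici.2 (by positivity)) (mem_Ici.2 (by positivity))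
      (by linarith [n.cast_nonneg (α := ℝ)])
  have hx0 := hx.1
  calc x ^ n / (n + 1) ≤ x ^ n / (n + 1) * (mom ω (n + 1) / mom ω (2 * n + 1)) :=
        le_mul_of_one_le_right (by positivity) hratio
    _ = ((-(-x : ℂ)) ^ n / (n + 1) * ((mom ω (n + 1) / mom ω (2 * n + 1) : ℝ) : ℂ)).re := by
        rw [neg_neg]
        norm_cast

theorem one_div_mul_log_le_bKerL1 {a : ℂ} (ha : a ∈ unitDisc) (ha0 : a ≠ 0) :
    ENNReal.ofReal (1 / ‖a‖ * Real.log (1 / (1 - ‖a‖))) ≤ bKerL1 ω a := by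
  have hx : ‖a‖ ∈ Ioo (0 : ℝ) 1 := ⟨norm_pos_iff.2 ha0, mem_ball_zero_iff.1 ha⟩
  calc ENNReal.ofReal (1 / ‖a‖ * Real.log (1 / (1 - ‖a‖)))
      ≤ ‖bProj ω sawtooth (-‖a‖)‖ₑ := by
        rw [← ofReal_norm]
        exact ENNReal.ofReal_le_ofReal (hω.one_div_mul_log_le_norm_bProj_sawtooth hx)
    _ ≤ bKerL1 ω (-‖a‖) := by
        simpa [Real.pi_ne_zero] using hω.enorm_bProj_le (fun ζ _ ↦ norm_sawtooth_le ζ) (-‖a‖)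
    _ = bKerL1 ω a := bKerL1_eq_of_norm_eq ω (by simp)

theorem iSup_bKerL1_eq_top : ⨆ a ∈ unitDisc, bKerL1 ω a = ⊤ := by
  refine ENNReal.eq_top_of_forall_nnreal_le fun M ↦ ?_
  obtain ⟨x, hx, hM⟩ := exists_lt_one_div_mul_log M
  have hnorm : ‖(x : ℂ)‖ = x := by rw [norm_real, Real.norm_of_nonneg hx.1.le]
  have hmem : (x : ℂ) ∈ unitDisc := mem_ball_zero_iff.2 (hnorm.trans_lt hx.2)
  calc (M : ℝ≥0∞) = ENNReal.ofReal M := ENNReal.ofReal_coe_nnreal.symm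
    _ ≤ ENNReal.ofReal (1 / ‖(x : ℂ)‖ * Real.log (1 / (1 - ‖(x : ℂ)‖))) := by
        rw [hnorm]; exact ENNReal.ofReal_le_ofReal hM.le
    _ ≤ bKerL1 ω x := hω.one_div_mul_log_le_bKerL1 hmem (ofReal_ne_zero.2 hx.1.ne')
    _ ≤ ⨆ a ∈ unitDisc, bKerL1 ω a := le_iSup₂ (f := fun a (_ : a ∈ unitDisc) ↦ bKerL1 ω a) _ hmem

theorem not_projBddH_one : ¬ ProjBddH ω fun _ ↦ 1 := by
  rintro ⟨C, hC, hbdd⟩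
  have hsup : wSup (fun _ ↦ 1) sawtooth ≤ ENNReal.ofReal π :=
    essSup_le_of_ae_le _ <| .of_forall fun ζ ↦ ENNReal.ofReal_le_ofReal <| by
      simpa using norm_sawtooth_le ζ
  obtain ⟨-, hdiff, hle⟩ := hbdd sawtooth measurable_sawtooth.aestronglyMeasurable
    (hsup.trans_lt ENNReal.ofReal_lt_top)
  have hpointwise : ∀ z ∈ unitDisc, ‖bProj ω sawtooth z‖ ≤ C * π := by
    intro z hz
    have hcont : ContinuousOn
        (fun z ↦ ENNReal.ofReal (‖bProj ω sawtooth z‖ * (fun _ ↦ (1 : ℝ)) ‖z‖)) unitDisc :=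
      ENNReal.continuous_ofReal.comp_continuousOn (hdiff.continuousOn.norm.mul continuousOn_const)
    have := (le_essSup_of_continuousOn Metric.isOpen_ball hcont hz).trans <|
      hle.trans (mul_le_mul_right hsup _)
    rw [← ENNReal.ofReal_mul hC.le, ENNReal.ofReal_le_ofReal_iff (by positivity)] at this
    simpa using this
  obtain ⟨x, hx, hM⟩ := exists_lt_one_div_mul_log (C * π)
  exact hM.not_ge ((hω.one_div_mul_log_le_norm_bProj_sawtooth hx).trans <|
    hpointwise _ (neg_ofReal_mem_unitDisc hx))

end IsRadialWeight

end

/-- There is an absolute constant `c > 0` so that, for every radial weight `ω`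
and `a ∈ 𝔻 \ {0}`, `∫_𝔻 |B^ω_a| ω dA ≥ (c/|a|) log(1/(1-|a|))`; in particular
the supremum over `a` is infinite and `P_ω` is never bounded from `L^∞`
to `H^∞`. -/
theorem stmt13 :
    (∃ c : ℝ, 0 < c ∧ ∀ ω : ℝ → ℝ, IsRadialWeight ω → ∀ a ∈ unitDisc, a ≠ 0 →
      ENNReal.ofReal ((c / ‖a‖) * Real.log (1 / (1 - ‖a‖))) ≤
        ∫⁻ ζ in unitDisc, ENNReal.ofReal (‖bKer ω a ζ‖ * ω ‖ζ‖)) ∧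
    (∀ ω : ℝ → ℝ, IsRadialWeight ω →
      (⨆ a ∈ unitDisc,
        ∫⁻ ζ in unitDisc, ENNReal.ofReal (‖bKer ω a ζ‖ * ω ‖ζ‖)) = ⊤) ∧
    (∀ ω : ℝ → ℝ, IsRadialWeight ω → ¬ ProjBddH ω (fun _ => 1)) :=
  ⟨⟨1, one_pos, fun _ hω _ ha ha0 ↦ hω.one_div_mul_log_le_bKerL1 ha ha0⟩,
    fun _ hω ↦ hω.iSup_bKerL1_eq_top, fun _ hω ↦ hω.not_projBddH_one⟩
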